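/- Let a > 0, h > 0 and w ∈ ℂ. Then ∫₀^a cosh(w q) J₀(h √(a² - q²)) dq = sin(a √(h² - w²)) / √(h² - w²), where sin denotes the complex sine, √(h² - w²) is any complex square root of h² - w² (the right-hand side is even in it, interpreted as a·1 when h² = w²), and J₀ is the Bessel function of the first kind of order 0, given by J₀(x) = (1/π) ∫₀^π cos(x sin θ) dθ. -/

import Mathlib

/-!
Extend `J₀` to complex arguments and expand `cosh (w q)` and `J₀ (h √(a² - q²))` in power series,
the second of which involves only powers of `h² (a² - q²)`. Termwise integration produces the Beta
integrals `∫₀^a q^(2n) (a² - q²)^m dq`. The resulting coefficient of `(w²)^n (-h²)^m` is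
`(n + m).choose n * a^(2(n + m) + 1) / (2(n + m) + 1)!`, so by the binomial theorem the terms of
total degree `n + m = N` add up to `(w² - h²)^N a^(2N + 1) / (2N + 1)!`, the `N`-th term of the
expansion of `sin (a μ) / μ`.
-/

open Real MeasureTheory intervalIntegral

/-- Bessel function of the first kind of order 0,
`J₀(x) = (1/π) ∫₀^π cos(x sin θ) dθ`. -/
noncomputable def besselJ0 (x : ℝ) : ℝ :=
  (1 / Real.pi) * ∫ θ in (0 : ℝ)..Real.pi, Real.cos (x * Real.sin θ)

/-- The entire extension of `besselJ0`, given by the same integral with the complex cosine. It lets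
the parameter `h` of the Bessel integral be complex. -/
noncomputable def complexBesselJ0 (z : ℂ) : ℂ :=
  (1 / π) * ∫ θ in (0 : ℝ)..π, Complex.cos (z * Real.sin θ)

theorem complexBesselJ0_ofReal (x : ℝ) : complexBesselJ0 x = besselJ0 x := by
  simp only [complexBesselJ0, besselJ0, Complex.ofReal_mul, Complex.ofReal_div, Complex.ofReal_one,
    ← intervalIntegral.integral_ofReal, Complex.ofReal_cos]

theorem hasSum_sum_antidiagonal {A α : Type*} [AddCommMonoid A] [Finset.HasAntidiagonal A]
    [AddCommMonoid α] [TopologicalSpace α] [ContinuousAdd α] [RegularSpace α]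
    {f : A × A → α} {s : α} (hf : HasSum f s) :
    HasSum (fun n => ∑ p ∈ Finset.HasAntidiagonal.antidiagonal n, f p) s :=
  (Finset.HasAntidiagonal.sigmaAntidiagonalEquivProd.hasSum_iff.mpr hf).sigma
    fun n => (Finset.HasAntidiagonal.antidiagonal n).hasSum f

theorem hasSum_intervalIntegral_mul {ι κ R : Type*} [Countable ι] [Countable κ]
    [NormedRing R] [NormedSpace ℝ R] [CompleteSpace R] {ν : Measure ℝ} [IsLocallyFiniteMeasure ν]
    {a b : ℝ} {F : ι → ℝ → R} {G : κ → ℝ → R} {f g : ℝ → R} {α : ι → ℝ} {β : κ → ℝ}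
    (hF : ∀ i, AEStronglyMeasurable (F i) (ν.restrict (Set.uIoc a b)))
    (hG : ∀ k, AEStronglyMeasurable (G k) (ν.restrict (Set.uIoc a b)))
    (hFα : ∀ i, ∀ t ∈ Set.uIoc a b, ‖F i t‖ ≤ α i) (hGβ : ∀ k, ∀ t ∈ Set.uIoc a b, ‖G k t‖ ≤ β k)
    (hα : Summable α) (hβ : Summable β)
    (hf : ∀ t ∈ Set.uIoc a b, HasSum (F · t) (f t))
    (hg : ∀ t ∈ Set.uIoc a b, HasSum (G · t) (g t)) :
    HasSum (fun p : ι × κ => ∫ t in a..b, F p.1 t * G p.2 t ∂ν) (∫ t in a..b, f t * g t ∂ν) := by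
  have hFG (p : ι × κ) (t : ℝ) (ht : t ∈ Set.uIoc a b) :
      ‖F p.1 t * G p.2 t‖ ≤ ‖α p.1‖ * ‖β p.2‖ :=
    norm_mul_le_of_le ((hFα _ t ht).trans (Real.le_norm_self _))
      ((hGβ _ t ht).trans (Real.le_norm_self _))
  have hαβ : Summable fun p : ι × κ => ‖α p.1‖ * ‖β p.2‖ := by
    simpa only [norm_mul] using hα.norm.mul_norm hβ.norm
  have hsum (t : ℝ) (ht : t ∈ Set.uIoc a b) :
      HasSum (fun p : ι × κ => F p.1 t * G p.2 t) (f t * g t) :=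
    HasSum.mul (f := (F · t)) (g := (G · t)) (hf t ht) (hg t ht)
      (.of_norm_bounded hαβ (hFG · t ht))
  exact intervalIntegral.hasSum_integral_of_dominated_convergence
    (fun p _ => ‖α p.1‖ * ‖β p.2‖) (fun p => (hF p.1).mul (hG p.2))
    (fun p => .of_forall (hFG p)) (.of_forall fun _ _ => hαβ) intervalIntegrable_const
    (.of_forall hsum)

theorem integral_sin_pow_even_eq_centralBinom (m : ℕ) :
    ∫ θ in (0 : ℝ)..π, Real.sin θ ^ (2 * m) = π * (m.centralBinom / 4 ^ m) := by
  rw [integral_sin_pow_even]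
  congr 1
  induction m with
  | zero => simp
  | succ m ih =>
    have hrec : ((m + 1 : ℕ) : ℝ) * (m + 1).centralBinom = 2 * (2 * m + 1) * m.centralBinom := by
      exact_mod_cast m.succ_mul_centralBinom_succ
    rw [Finset.prod_range_succ, ih]
    push_cast at hrec
    field_simp
    linear_combination (-2 * 4 ^ m : ℝ) * hrec

theorem integral_cos_mul_sin_term (z : ℂ) (m : ℕ) :
    ∫ θ in (0 : ℝ)..π, (-1) ^ m * (z * Real.sin θ) ^ (2 * m) / ((2 * m).factorial : ℂ) =
      π * ((-(z ^ 2) / 4) ^ m / (m.factorial : ℂ) ^ 2) := by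
  have hsplit (θ : ℝ) : (-1) ^ m * (z * Real.sin θ) ^ (2 * m) / ((2 * m).factorial : ℂ) =
      (-(z ^ 2)) ^ m / (2 * m).factorial * ((Real.sin θ ^ (2 * m) : ℝ) : ℂ) := by
    rw [mul_pow, neg_pow (z ^ 2), ← pow_mul]
    push_cast
    ring
  simp_rw [hsplit]
  rw [intervalIntegral.integral_const_mul, intervalIntegral.integral_ofReal,
    integral_sin_pow_even_eq_centralBinom, Nat.centralBinom_eq_two_mul_choose, two_mul m, div_pow]
  push_cast [Nat.cast_add_choose]
  have := Nat.factorial_ne_zero (m + m)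
  field_simp

theorem hasSum_complexBesselJ0 (z : ℂ) :
    HasSum (fun m : ℕ => (-(z ^ 2) / 4) ^ m / (m.factorial : ℂ) ^ 2) (complexBesselJ0 z) := by
  have hbound (m : ℕ) (θ : ℝ) :
      ‖(-1) ^ m * (z * Real.sin θ) ^ (2 * m) / ((2 * m).factorial : ℂ)‖ ≤
        ‖z‖ ^ (2 * m) / (2 * m).factorial := by
    simp only [norm_div, norm_mul, norm_pow, norm_neg, norm_one, one_pow, one_mul,
      Complex.norm_natCast, Complex.norm_real]
    gcongr
    exact mul_le_of_le_one_right (norm_nonneg z) (Real.abs_sin_le_one θ)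
  have hint : HasSum (fun m : ℕ => ∫ θ in (0 : ℝ)..π,
      (-1) ^ m * (z * Real.sin θ) ^ (2 * m) / ((2 * m).factorial : ℂ))
      (∫ θ in (0 : ℝ)..π, Complex.cos (z * Real.sin θ)) :=
    intervalIntegral.hasSum_integral_of_dominated_convergence
      (fun m _ => ‖z‖ ^ (2 * m) / (2 * m).factorial)
      (fun m => Continuous.aestronglyMeasurable (by fun_prop))
      (fun m => .of_forall fun θ _ => hbound m θ)
      (.of_forall fun _ _ => (Real.hasSum_cosh ‖z‖).summable) intervalIntegrable_const
      (.of_forall fun θ _ => Complex.hasSum_cos _)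
  have hπ : (π : ℂ) ≠ 0 := Complex.ofReal_ne_zero.mpr pi_ne_zero
  simpa only [complexBesselJ0, integral_cos_mul_sin_term, one_div, inv_mul_cancel_left₀ hπ]
    using hint.mul_left (1 / (π : ℂ))

theorem hasSum_complexBesselJ0_mul_sqrt (h : ℂ) {r : ℝ} (hr : 0 ≤ r) :
    HasSum (fun m : ℕ => (-(h ^ 2 * r) / 4) ^ m / (m.factorial : ℂ) ^ 2)
      (complexBesselJ0 (h * Real.sqrt r)) := by
  simpa only [mul_pow, ← Complex.ofReal_pow, Real.sq_sqrt hr]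
    using hasSum_complexBesselJ0 (h * Real.sqrt r)

theorem integral_pow_mul_sq_sub_sq_pow_succ (a : ℝ) (k m : ℕ) :
    (k + 1) * ∫ q in (0 : ℝ)..a, q ^ k * (a ^ 2 - q ^ 2) ^ (m + 1) =
      2 * (m + 1) * ∫ q in (0 : ℝ)..a, q ^ (k + 2) * (a ^ 2 - q ^ 2) ^ m := by
  have hderiv (q : ℝ) : HasDerivAt (fun q => q ^ (k + 1) * (a ^ 2 - q ^ 2) ^ (m + 1))
      ((k + 1) * (q ^ k * (a ^ 2 - q ^ 2) ^ (m + 1)) -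
        2 * (m + 1) * (q ^ (k + 2) * (a ^ 2 - q ^ 2) ^ m)) q := by
    convert! (hasDerivAt_pow (k + 1) q).mul
      (((hasDerivAt_pow 2 q).const_sub (a ^ 2)).pow (m + 1)) using 1
    simp only [Nat.add_sub_cancel, Pi.pow_apply]
    push_cast
    ring
  have hzero := integral_eq_sub_of_hasDerivAt (a := 0) (b := a) (fun q _ => hderiv q)
    (Continuous.intervalIntegrable (by fun_prop) _ _)
  rw [intervalIntegral.integral_sub (Continuous.intervalIntegrable (by fun_prop) _ _)
    (Continuous.intervalIntegrable (by fun_prop) _ _), intervalIntegral.integral_const_mul,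
    intervalIntegral.integral_const_mul] at hzero
  simpa [sub_eq_zero] using hzero

theorem integral_pow_even_mul_sq_sub_sq_pow (a : ℝ) (n m : ℕ) :
    ∫ q in (0 : ℝ)..a, q ^ (2 * n) * (a ^ 2 - q ^ 2) ^ m =
      (m.factorial * 4 ^ m * (n + m).factorial * (2 * n).factorial : ℝ) /
        (n.factorial * (2 * (n + m) + 1).factorial) * a ^ (2 * (n + m) + 1) := by
  induction m generalizing n with
  | zero =>
    simp only [pow_zero, mul_one, integral_pow, add_zero, Nat.factorial_succ, Nat.factorial_zero]
    have := Nat.factorial_ne_zero n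
    have := Nat.factorial_ne_zero (2 * n)
    push_cast
    field_simp
    simp
  | succ m ih =>
    have hrec := integral_pow_mul_sq_sub_sq_pow_succ a (2 * n) m
    rw [show 2 * n + 2 = 2 * (n + 1) by ring, ih (n + 1), show n + 1 + m = n + (m + 1) by ring,
      show 2 * (n + 1) = 2 * n + 1 + 1 by ring] at hrec
    refine mul_left_cancel₀ (by positivity : ((2 * n : ℕ) + 1 : ℝ) ≠ 0) (hrec.trans ?_)
    simp only [Nat.factorial_succ (2 * n + 1), Nat.factorial_succ (2 * n), Nat.factorial_succ n,
      Nat.factorial_succ m]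
    have := Nat.factorial_ne_zero n
    have := Nat.factorial_ne_zero (2 * (n + (m + 1)) + 1)
    push_cast
    field_simp
    ring

/-- The term of degree `2 * p.1` in `w` and `2 * p.2` in `h` of the product of the power series of
`cosh (w q)` and `J₀ (h √(a² - q²))`. The even powers of the square root are written as powers of
`a² - q²`, so that the term is a polynomial in `q`. -/
noncomputable def coshMulBesselJ0Term (a : ℝ) (h w : ℂ) (p : ℕ × ℕ) (q : ℝ) : ℂ :=
  (w * q) ^ (2 * p.1) / (2 * p.1).factorial *
    ((-(h ^ 2 * ((a ^ 2 - q ^ 2 : ℝ) : ℂ)) / 4) ^ p.2 / (p.2.factorial : ℂ) ^ 2)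

theorem integral_coshMulBesselJ0Term (a : ℝ) (h w : ℂ) (n m : ℕ) :
    ∫ q in (0 : ℝ)..a, coshMulBesselJ0Term a h w (n, m) q =
      (n + m).choose n • ((w ^ 2) ^ n * (-h ^ 2) ^ m) *
        (a ^ (2 * (n + m) + 1) / (2 * (n + m) + 1).factorial) := by
  have hsplit (q : ℝ) : coshMulBesselJ0Term a h w (n, m) q =
      (w ^ 2) ^ n * (-h ^ 2) ^ m / ((2 * n).factorial * 4 ^ m * (m.factorial : ℂ) ^ 2) *
        ((q ^ (2 * n) * (a ^ 2 - q ^ 2) ^ m : ℝ) : ℂ) := by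
    rw [coshMulBesselJ0Term, ← neg_mul, div_pow, mul_pow (-h ^ 2), mul_pow w, pow_mul w]
    push_cast
    ring
  simp_rw [hsplit]
  rw [intervalIntegral.integral_const_mul, intervalIntegral.integral_ofReal,
    integral_pow_even_mul_sq_sub_sq_pow, nsmul_eq_mul, Nat.cast_add_choose]
  have := Nat.factorial_ne_zero (2 * n)
  push_cast
  field_simp

theorem hasSum_integral_coshMulBesselJ0Term (a : ℝ) (h w : ℂ) :
    HasSum (fun p : ℕ × ℕ => ∫ q in (0 : ℝ)..a, coshMulBesselJ0Term a h w p q)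
      (∫ q in (0 : ℝ)..a,
        Complex.cosh (w * q) * complexBesselJ0 (h * Real.sqrt (a ^ 2 - q ^ 2))) := by
  have habs {q : ℝ} (hq : q ∈ Set.uIoc 0 a) : |q| ≤ |a| := by
    simpa using Set.abs_sub_left_of_mem_uIcc (Set.uIoc_subset_uIcc hq)
  have hsub {q : ℝ} (hq : q ∈ Set.uIoc 0 a) : 0 ≤ a ^ 2 - q ^ 2 :=
    sub_nonneg.mpr (sq_le_sq.mpr (habs hq))
  have hcosh_bound (n : ℕ) (q : ℝ) (hq : q ∈ Set.uIoc 0 a) :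
      ‖(w * q) ^ (2 * n) / (2 * n).factorial‖ ≤ (‖w‖ * |a|) ^ (2 * n) / (2 * n).factorial := by
    simp only [norm_div, norm_pow, norm_mul, Complex.norm_natCast, Complex.norm_real,
      Real.norm_eq_abs]
    gcongr (‖w‖ * ?_) ^ _ / _
    exact habs hq
  have hJ0_bound (m : ℕ) (q : ℝ) (hq : q ∈ Set.uIoc 0 a) :
      ‖(-(h ^ 2 * ((a ^ 2 - q ^ 2 : ℝ) : ℂ)) / 4) ^ m / (m.factorial : ℂ) ^ 2‖ ≤
        (‖h‖ ^ 2 * a ^ 2 / 4) ^ m / m.factorial := by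
    have hfactorial : (1 : ℝ) ≤ m.factorial := by exact_mod_cast m.factorial_pos
    have hsub_q := hsub hq
    simp only [norm_div, norm_pow, norm_neg, norm_mul, Complex.norm_natCast, Complex.norm_real,
      Real.norm_of_nonneg hsub_q, Complex.norm_ofNat]
    gcongr
    · exact sub_le_self _ (sq_nonneg q)
    · exact le_self_pow₀ hfactorial two_ne_zero
  exact hasSum_intervalIntegral_mul
    (F := fun (n : ℕ) (q : ℝ) => (w * q) ^ (2 * n) / (2 * n).factorial)
    (G := fun (m : ℕ) (q : ℝ) =>
      (-(h ^ 2 * ((a ^ 2 - q ^ 2 : ℝ) : ℂ)) / 4) ^ m / (m.factorial : ℂ) ^ 2)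
    (fun n => Continuous.aestronglyMeasurable (by fun_prop))
    (fun m => Continuous.aestronglyMeasurable (by fun_prop))
    hcosh_bound hJ0_bound (Real.hasSum_cosh _).summable (Real.summable_pow_div_factorial _)
    (fun q _ => Complex.hasSum_cosh _) (fun q hq => hasSum_complexBesselJ0_mul_sqrt h (hsub hq))

theorem sum_antidiagonal_integral_coshMulBesselJ0Term (a : ℝ) (h w : ℂ) (N : ℕ) :
    ∑ p ∈ Finset.HasAntidiagonal.antidiagonal N, ∫ q in (0 : ℝ)..a, coshMulBesselJ0Term a h w p q =
      (w ^ 2 - h ^ 2) ^ N * (a ^ (2 * N + 1) / (2 * N + 1).factorial) := by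
  rw [sub_eq_add_neg, (Commute.all _ _).add_pow', Finset.sum_mul]
  refine Finset.sum_congr rfl fun p hp => ?_
  rw [integral_coshMulBesselJ0Term, Finset.HasAntidiagonal.mem_antidiagonal.mp hp]

theorem hasSum_sin_mul_div (z μ : ℂ) :
    HasSum (fun N : ℕ => (-(μ ^ 2)) ^ N * (z ^ (2 * N + 1) / (2 * N + 1).factorial))
      (if μ = 0 then z else Complex.sin (z * μ) / μ) := by
  split_ifs with hμ
  · convert hasSum_single (0 : ℕ) fun N hN => ?_
    · simp
    · simp [hμ, hN]
  · convert! (Complex.hasSum_sin (z * μ)).div_const μ using 1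
    funext N
    rw [neg_pow]
    field_simp
    ring

theorem statement12_general (a : ℝ) (h w μ : ℂ) (hμ : μ ^ 2 = h ^ 2 - w ^ 2) :
    ∫ q in (0 : ℝ)..a, Complex.cosh (w * q) * complexBesselJ0 (h * Real.sqrt (a ^ 2 - q ^ 2)) =
      if μ = 0 then (a : ℂ) else Complex.sin (a * μ) / μ := by
  have hseries := hasSum_sum_antidiagonal (hasSum_integral_coshMulBesselJ0Term a h w)
  have hneg : w ^ 2 - h ^ 2 = -(μ ^ 2) := by rw [hμ, neg_sub]
  simp only [sum_antidiagonal_integral_coshMulBesselJ0Term, hneg] at hseries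
  exact hseries.unique (hasSum_sin_mul_div a μ)

/-- the Bessel integral
`∫₀^a cosh(wq) J₀(h√(a²-q²)) dq = sin(a√(h²-w²))/√(h²-w²)`, for any complex
square root `μ` of `h² - w²` (the right side is even in `μ`, interpreted as
`a` when `μ = 0`). -/
theorem statement12 (a h : ℝ) (ha : 0 < a) (hh : 0 < h) (w μ : ℂ)
    (hμ : μ ^ 2 = (h : ℂ) ^ 2 - w ^ 2) :
    (∫ q in (0 : ℝ)..a,
        Complex.cosh (w * (q : ℂ)) *
          (besselJ0 (h * Real.sqrt (a ^ 2 - q ^ 2)) : ℂ)) =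
      if μ = 0 then (a : ℂ) else Complex.sin ((a : ℂ) * μ) / μ := by
  simpa only [← complexBesselJ0_ofReal, Complex.ofReal_mul] using statement12_general a h w μ hμ
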